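/- The determinant of the character table X of S_n satisfies det X = ∏_{μ ∈ P(n)} a_μ = ∏_{μ ∈ P(n)} b_μ, where for μ = (1^{m₁},2^{m₂},…), a_μ = ∏_i i^{m_i} and b_μ = ∏_i m_i!. -/

import Mathlib

open scoped Classical

namespace SnTable

variable {n : ℕ}

/-- The parts of a partition, listed in weakly decreasing order. -/
def descList (μ : Nat.Partition n) : List ℕ := (μ.parts.sort (· ≤ ·)).reverse

/-- Strict lexicographic order on partitions of `n` (comparing the lists of parts
written in decreasing order). -/
def plex (μ ν : Nat.Partition n) : Prop := List.Lex (· < ·) (descList μ) (descList ν)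

/-- Weak lexicographic order on partitions of `n`. -/
def plexLE (μ ν : Nat.Partition n) : Prop := μ = ν ∨ plex μ ν

/-- `a_μ = ∏ i^{m_i(μ)}`, the product of the parts of `μ`. -/
def aNum (μ : Nat.Partition n) : ℕ := μ.parts.prod

/-- `b_μ = ∏ m_i(μ)!`, the product of the factorials of the multiplicities. -/
def bNum (μ : Nat.Partition n) : ℕ :=
  ∏ i ∈ μ.parts.toFinset, (μ.parts.count i).factorial

/-- `z_μ = a_μ b_μ`, the centralizer order of an element of cycle type `μ` in `S_n`. -/
def zNum (μ : Nat.Partition n) : ℕ := aNum μ * bNum μ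

/-- The cycle type of a permutation of `Fin n`, as a partition of `n`. -/
def cycleTypePartition (g : Equiv.Perm (Fin n)) : Nat.Partition n :=
  (Fintype.card_fin n) ▸ g.partition

/-- The value at `g` of the permutation character `ξ^λ` of `S_n` obtained by inducing the
trivial character from the Young subgroup `S_λ`: it counts the ordered set partitions of
`Fin n` with block sizes `λ₁ ≥ λ₂ ≥ …` that are fixed by `g`. -/
def permChar (lam : Nat.Partition n) (g : Equiv.Perm (Fin n)) : ℕ :=
  Fintype.card {f : Fin n → Fin (descList lam).length //
    (∀ x, f (g x) = f x) ∧
    ∀ j, (Finset.univ.filter fun x => f x = j).card = (descList lam).get j}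

/-- `X` is the character table of the symmetric group `S_n`, with rows and columns indexed
by the partitions of `n`: each row is an irreducible character (as a class function, via
cycle types), distinct rows are distinct characters, and the labelling is the standard one,
pinned down by the fact that the transition matrix expressing the Young permutation
characters `ξ^λ` in terms of the rows of `X` is unitriangular with respect to the
lexicographic order. -/
def IsCharTable (X : Nat.Partition n → Nat.Partition n → ℤ) : Prop :=
  (∀ lam : Nat.Partition n, ∃ V : FDRep ℂ (Equiv.Perm (Fin n)),
      CategoryTheory.Simple V ∧
      ∀ g : Equiv.Perm (Fin n), V.character g = (X lam (cycleTypePartition g) : ℂ)) ∧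
  (∃ d : Nat.Partition n → Nat.Partition n → ℤ,
      (∀ lam, d lam lam = 1) ∧
      (∀ lam mu, d lam mu ≠ 0 → plexLE lam mu) ∧
      (∀ lam (g : Equiv.Perm (Fin n)),
        (permChar lam g : ℤ) = ∑ mu, d lam mu * X mu (cycleTypePartition g))) ∧
  Function.Injective X



lemma det_of_rank {α β : Type*} [Fintype α] [DecidableEq α] [LinearOrder β]
    (M : Matrix α α ℤ) (f : α → β) (h : ∀ i j, M i j ≠ 0 → i = j ∨ f i < f j) :
    M.det = ∏ i, M i i := by
  let F : α → Lex (β × Fin (Fintype.card α)) := fun a => toLex (f a, Fintype.equivFin α a)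
  have hF : Function.Injective F := by
    intro a b hab
    have h2 : (f a, Fintype.equivFin α a) = (f b, Fintype.equivFin α b) := toLex.injective hab
    exact (Fintype.equivFin α).injective (Prod.ext_iff.1 h2).2
  rw [Matrix.det_apply]
  rw [Finset.sum_eq_single 1]
  · simp
  · intro σ _ hσ
    by_contra hne
    have hne' : ∏ i, M (σ i) i ≠ 0 := by
      intro h0; apply hne; rw [h0]; simp
    rw [Finset.prod_ne_zero_iff] at hne'
    apply hσ
    have hlt : ∀ i, σ i = i ∨ F (σ i) < F i := by
      intro i
      rcases h _ _ (hne' i (Finset.mem_univ _)) with h | h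
      · exact Or.inl h
      · right
        exact Prod.Lex.toLex_lt_toLex.2 (Or.inl h)
    by_contra hs
    have hex : ∃ i, σ i ≠ i := by
      by_contra hc
      push Not at hc
      exact hs (Equiv.ext hc)
    obtain ⟨i, hi, hmin⟩ := Finset.exists_min_image (Finset.univ.filter fun i => σ i ≠ i) F
      (by obtain ⟨i, hi⟩ := hex; exact ⟨i, by simp [hi]⟩)
    simp only [Finset.mem_filter, Finset.mem_univ, true_and] at hi hmin
    have h1 := (hlt i).resolve_left hi
    have h2 := hmin (σ i) (fun hc => hi (σ.injective hc))
    exact absurd h1 (not_lt.2 h2)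
  · simp

lemma cast_parts {m n : ℕ} (h : m = n) (p : Nat.Partition m) : (h ▸ p).parts = p.parts := by
  subst h; rfl

lemma cycleTypePartition_parts (g : Equiv.Perm (Fin n)) :
    (cycleTypePartition g).parts = g.partition.parts := by
  unfold cycleTypePartition
  exact cast_parts _ _

lemma exists_perm (μ : Nat.Partition n) :
    ∃ g : Equiv.Perm (Fin n), cycleTypePartition g = μ := by
  have hsplit : μ.parts.filter (fun k => 2 ≤ k) + μ.parts.filter (fun k => ¬ 2 ≤ k) = μ.parts :=
    Multiset.filter_add_not _ _
  have hone : μ.parts.filter (fun k => ¬ 2 ≤ k) =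
      Multiset.replicate (Multiset.card (μ.parts.filter (fun k => ¬ 2 ≤ k))) 1 := by
    rw [Multiset.eq_replicate_card]
    intro b hb
    rw [Multiset.mem_filter] at hb
    have := μ.parts_pos hb.1
    omega
  have hsum : (μ.parts.filter (fun k => 2 ≤ k)).sum +
      Multiset.card (μ.parts.filter (fun k => ¬ 2 ≤ k)) = n := by
    have := congrArg Multiset.sum hsplit
    rw [hone, Multiset.sum_add, μ.parts_sum] at this
    simpa using this
  obtain ⟨g, hg⟩ := (Equiv.Perm.exists_with_cycleType_iff (Fin n)
    (m := μ.parts.filter (fun k => 2 ≤ k))).2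
    ⟨by simp only [Fintype.card_fin]; omega, fun a ha => (Multiset.mem_filter.1 ha).2⟩
  refine ⟨g, ?_⟩
  apply Nat.Partition.ext
  rw [cycleTypePartition_parts, Equiv.Perm.parts_partition, ← Equiv.Perm.sum_cycleType, hg]
  conv_rhs => rw [← hsplit, hone]
  congr 2
  simp only [Fintype.card_fin]
  omega

lemma exists_orbits (g : Equiv.Perm (Fin n)) :
    ∃ (Ω : Type) (_ : Fintype Ω) (q : Fin n → Ω), Function.Surjective q ∧
      (∀ x y, q x = q y ↔ g.SameCycle x y) ∧
      (Finset.univ.val.map fun ω => (Finset.univ.filter fun x => q x = ω).card) =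
        g.partition.parts := by
  let q : Fin n → g.cycleFactorsFinset ⊕ {x : Fin n // g x = x} := fun x =>
    if h : g x = x then Sum.inr ⟨x, h⟩ else
      Sum.inl ⟨g.cycleOf x, Equiv.Perm.cycleOf_mem_cycleFactorsFinset_iff.2
        (Equiv.Perm.mem_support.2 h)⟩
  have q1 : ∀ x (h : g x = x), q x = Sum.inr ⟨x, h⟩ := fun x h => dif_pos h
  have q2 : ∀ x (h : g x ≠ x), q x = Sum.inl ⟨g.cycleOf x,
      Equiv.Perm.cycleOf_mem_cycleFactorsFinset_iff.2 (Equiv.Perm.mem_support.2 h)⟩ :=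
    fun x h => dif_neg h
  have hl : ∀ (c : g.cycleFactorsFinset) x, q x = Sum.inl c ↔ x ∈ c.1.support := by
    rintro ⟨c, hc⟩ x
    rw [← Equiv.Perm.eq_cycleOf_of_mem_cycleFactorsFinset_iff g c hc]
    by_cases h : g x = x
    · rw [q1 x h]
      simp only [reduceCtorEq, false_iff]
      rintro rfl
      rw [Equiv.Perm.cycleOf_mem_cycleFactorsFinset_iff, Equiv.Perm.mem_support] at hc
      exact hc h
    · rw [q2 x h]
      simp [eq_comm]
  have hr : ∀ (c : {x : Fin n // g x = x}) x, q x = Sum.inr c ↔ x = c.1 := by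
    rintro ⟨c, hc⟩ x
    by_cases h : g x = x
    · rw [q1 x h]; simp
    · rw [q2 x h]; simp only [reduceCtorEq, false_iff]
      rintro rfl; exact h hc
  refine ⟨_, inferInstance, q, ?_, ?_, ?_⟩
  · rintro (c | c)
    · obtain ⟨x, hx⟩ := (Equiv.Perm.mem_cycleFactorsFinset_iff.1 c.2).1.nonempty_support
      exact ⟨x, (hl c x).2 hx⟩
    · exact ⟨c.1, (hr c _).2 rfl⟩
  · intro x y
    by_cases h : g y = y
    · rw [q1 y h, hr]
      constructor
      · rintro rfl; exact Equiv.Perm.SameCycle.refl _ _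
      · intro hs
        exact (hs.symm.eq_of_left h).symm
    · rw [q2 y h, hl]
      simp only
      rw [Equiv.Perm.mem_support_cycleOf_iff' h, Equiv.Perm.sameCycle_comm]
  · trans Finset.univ.val.map
        (Sum.elim (fun c : g.cycleFactorsFinset => c.1.support.card)
          (fun _ : {x : Fin n // g x = x} => 1))
    · apply Multiset.map_congr rfl
      rintro (c | c) _
      · simp only [Sum.elim_inl]
        congr 1
        ext x
        refine (@Finset.mem_filter _ _ (_) _ _).trans ?_
        simp only [Finset.mem_univ, true_and]
        exact hl c x
      · simp only [Sum.elim_inr]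
        refine Finset.card_eq_one.2 ⟨c.1, ?_⟩
        ext x
        refine (@Finset.mem_filter _ _ (_) _ _).trans ?_
        simp only [Finset.mem_univ, true_and, Finset.mem_singleton]
        exact hr c x
    rw [Equiv.Perm.parts_partition, Equiv.Perm.cycleType_def, ← Finset.univ_disjSum_univ]
    simp only [Finset.val_disjSum, Multiset.disjSum, Multiset.map_add, Multiset.map_map]
    congr 1
    · have := Multiset.attach_map_val' g.cycleFactorsFinset.1 (Finset.card ∘ Equiv.Perm.support)
      simpa using this
    · simp only [Function.comp_def, Sum.elim_inr, Multiset.map_const']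
      congr 1
      rw [← Finset.card_compl, ← Finset.card_def, Finset.card_univ, Fintype.card_subtype]
      congr 1
      ext x
      simp

lemma exists_equiv_of_map {A B : Type*} [Fintype A] [Fintype B] (s : A → ℕ) (t : B → ℕ)
    (h : Finset.univ.val.map s = Finset.univ.val.map t) :
    ∃ e : A ≃ B, ∀ a, t (e a) = s a := by
  have hc : ∀ k, Fintype.card {a // s a = k} = Fintype.card {b // t b = k} := by
    intro k
    have := congrArg (Multiset.count k) h
    rw [Multiset.count_map, Multiset.count_map] at this
    rw [Fintype.card_subtype, Fintype.card_subtype, Finset.card_def, Finset.card_def,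
      Finset.filter_val, Finset.filter_val]
    simpa [eq_comm] using this
  refine ⟨(Equiv.sigmaFiberEquiv s).symm.trans ((Equiv.sigmaCongrRight
    (fun k => Fintype.equivOfCardEq (hc k))).trans (Equiv.sigmaFiberEquiv t)), ?_⟩
  intro a
  exact (Fintype.equivOfCardEq (hc (s a)) ⟨a, rfl⟩).2

/-- Colourings of the orbits with prescribed total sizes. -/
def Col {A B : Type*} [Fintype A] (s : A → ℕ) (t : B → ℕ) (h : A → B) : Prop :=
  ∀ j, ∑ a with h a = j, s a = t j

lemma Col.surj {A B : Type*} [Fintype A] [Fintype B] {s : A → ℕ} {t : B → ℕ} {h : A → B}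
    (hc : Col s t h) (ht : ∀ j, 0 < t j) : Function.Surjective h := by
  intro j
  by_contra hne
  push Not at hne
  have := hc j
  rw [Finset.filter_false_of_mem (fun a _ => hne a)] at this
  have := ht j
  simp_all

lemma Col.eq_of_bij {A B : Type*} [Fintype A] [Fintype B] {s : A → ℕ} {t : B → ℕ} {h : A → B}
    (hc : Col s t h) (hb : Function.Injective h) (a : A) : t (h a) = s a := by
  rw [← hc (h a)]
  rw [show (Finset.univ.filter fun x => h x = h a) = {a} by ext; simp [hb.eq_iff]]
  simp

lemma col_of_bij {A B : Type*} [Fintype A] [Fintype B] {s : A → ℕ} {t : B → ℕ} {h : A → B}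
    (hb : Function.Bijective h) (hh : ∀ a, t (h a) = s a) : Col s t h := by
  intro j
  obtain ⟨a, rfl⟩ := hb.2 j
  rw [show (Finset.univ.filter fun x => h x = h a) = {a} by ext; simp [hb.1.eq_iff]]
  simp [hh]

lemma col_card {A B : Type*} [Fintype A] [Fintype B] (s : A → ℕ) (t : B → ℕ)
    (ht : ∀ j, 0 < t j) (h : Finset.univ.val.map s = Finset.univ.val.map t) :
    Fintype.card {h : A → B // Col s t h} =
      ∏ i ∈ (Finset.univ.val.map t).toFinset,
        ((Finset.univ.val.map t).count i).factorial := by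
  obtain ⟨e, he⟩ := exists_equiv_of_map s t h
  have hbij : ∀ f : {h : A → B // Col s t h}, Function.Bijective f.1 := fun f =>
    (Fintype.bijective_iff_surjective_and_card _).2 ⟨f.2.surj ht, Fintype.card_congr e⟩
  have E : {h : A → B // Col s t h} ≃ {σ : Equiv.Perm B // t ∘ σ = t} :=
    { toFun := fun f => ⟨e.symm.trans (Equiv.ofBijective f.1 (hbij f)), by
        funext b
        simp only [Function.comp_apply, Equiv.trans_apply, Equiv.ofBijective_apply]
        rw [f.2.eq_of_bij (hbij f).1, ← he, Equiv.apply_symm_apply]⟩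
      invFun := fun σ => ⟨fun a => σ.1 (e a), col_of_bij (σ.1.bijective.comp e.bijective)
        (fun a => by rw [← he]; exact congrFun σ.2 (e a))⟩
      left_inv := fun f => by ext; simp
      right_inv := fun σ => by ext; simp }
  rw [Fintype.card_congr E]
  have := DomMulAct.stabilizer_card' t
  rw [Fintype.card_congr (Equiv.refl _), this]
  apply Finset.prod_congr
  · ext; simp
  · intro i _
    congr 1
    rw [Multiset.count_map, Fintype.card_subtype, Finset.card_def, Finset.filter_val]
    simp [eq_comm]

lemma permChar_eq (lam : Nat.Partition n) (g : Equiv.Perm (Fin n)) {Ω : Type} [Fintype Ω]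
    (q : Fin n → Ω) (hq : Function.Surjective q) (hs : ∀ x y, q x = q y ↔ g.SameCycle x y) :
    permChar lam g = Fintype.card {h : Ω → Fin (descList lam).length //
      Col (fun ω => (Finset.univ.filter fun x => q x = ω).card) (descList lam).get h} := by
  unfold permChar
  symm
  have hcount : ∀ (h : Ω → Fin (descList lam).length) j,
      (Finset.univ.filter fun x => h (q x) = j).card =
      ∑ ω with h ω = j, (Finset.univ.filter fun x => q x = ω).card := by
    intro h j
    rw [Finset.card_eq_sum_card_fiberwise (f := q) (t := Finset.univ.filter fun ω => h ω = j)]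
    · apply Finset.sum_congr rfl
      intro ω hω
      congr 1
      ext x
      simp only [Finset.mem_filter, Finset.mem_univ, true_and] at hω ⊢
      constructor
      · exact fun h => h.2
      · rintro rfl; exact ⟨hω, rfl⟩
    · intro x hx
      simpa using hx
  apply Fintype.card_of_bijective (f := fun h => ⟨fun x => h.1 (q x), fun x => by
      show h.1 (q (g x)) = h.1 (q x)
      rw [(hs (g x) x).2 (by simpa using Equiv.Perm.SameCycle.refl g x)], fun j => by
        rw [← h.2 j]; convert hcount h.1 j⟩)
  constructor
  · intro h h' e
    apply Subtype.ext
    funext ω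
    obtain ⟨x, rfl⟩ := hq ω
    exact congrFun (congrArg Subtype.val e) x
  · rintro ⟨f, hf1, hf2⟩
    have hf : ∀ x y, q x = q y → f x = f y := by
      intro x y hxy
      obtain ⟨k, hk⟩ := (hs x y).1 hxy
      have hpow : ∀ (m : ℕ) z, f ((g ^ m) z) = f z := by
        intro m
        induction m with
        | zero => simp
        | succ m ih => intro z; rw [pow_succ', Equiv.Perm.mul_apply, hf1, ih]
      rw [← hk]
      obtain ⟨m, rfl | rfl⟩ := k.eq_nat_or_neg
      · simp [hpow]
      · have := hpow m ((g ^ (-(m : ℤ))) x)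
        rw [← this]
        simp
    have hval : ∀ x, f (Function.surjInv hq (q x)) = f x :=
      fun x => hf _ _ (Function.surjInv_eq hq _)
    refine ⟨⟨fun ω => f (Function.surjInv hq ω), ?_⟩, ?_⟩
    · intro j
      have hh := hcount (fun ω => f (Function.surjInv hq ω)) j
      simp only [hval] at hh
      rw [← hf2 j]
      convert hh.symm
    · apply Subtype.ext
      funext x
      exact hval x

lemma descList_map (lam : Nat.Partition n) :
    Finset.univ.val.map (descList lam).get = lam.parts := by
  rw [Fin.univ_val_map, List.ofFn_get]
  unfold descList
  simp

lemma descList_pos (lam : Nat.Partition n) (j) : 0 < (descList lam).get j := by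
  apply lam.parts_pos
  rw [← descList_map lam]
  exact Multiset.mem_map_of_mem _ (Finset.mem_univ j)

lemma descList_injective : Function.Injective (descList : Nat.Partition n → List ℕ) := by
  intro a b h
  apply Nat.Partition.ext
  rw [← descList_map, ← descList_map, Fin.univ_val_map, Fin.univ_val_map, List.ofFn_get,
    List.ofFn_get, h]

lemma permChar_diag (g : Equiv.Perm (Fin n)) :
    permChar (cycleTypePartition g) g = bNum (cycleTypePartition g) := by
  obtain ⟨Ω, _, q, hq, hs, hp⟩ := exists_orbits g
  rw [permChar_eq _ g q hq hs, col_card _ _ (descList_pos _), descList_map]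
  · rfl
  · rw [descList_map, hp, cycleTypePartition_parts]

lemma permChar_tri (lam : Nat.Partition n) (g : Equiv.Perm (Fin n)) (h0 : permChar lam g ≠ 0) :
    lam = cycleTypePartition g ∨
      Multiset.card lam.parts < Multiset.card (cycleTypePartition g).parts := by
  obtain ⟨Ω, _, q, hq, hs, hp⟩ := exists_orbits g
  rw [permChar_eq _ g q hq hs] at h0
  obtain ⟨h, hc⟩ := Fintype.card_pos_iff.1 (Nat.pos_of_ne_zero h0)
  have hsurj := hc.surj (descList_pos _)
  have hle := Fintype.card_le_of_surjective h hsurj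
  have h1 : Multiset.card lam.parts = Fintype.card (Fin (descList lam).length) := by
    rw [← descList_map]; simp
  have h2 : Multiset.card (cycleTypePartition g).parts = Fintype.card Ω := by
    rw [cycleTypePartition_parts, ← hp]; simp
  rcases hle.eq_or_lt with heq | hlt
  · left
    have hb : Function.Bijective h :=
      (Fintype.bijective_iff_surjective_and_card _).2 ⟨hsurj, heq.symm⟩
    apply Nat.Partition.ext
    rw [cycleTypePartition_parts, ← hp, ← descList_map,
      ← Multiset.map_univ_val_equiv (Equiv.ofBijective h hb), Multiset.map_map]
    apply Multiset.map_congr rfl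
    intro a _
    exact hc.eq_of_bij hb.1 a
  · right; omega

lemma det_eq_b (X : Nat.Partition n → Nat.Partition n → ℤ) (hX : IsCharTable X) :
    (Matrix.of X).det = ∏ μ : Nat.Partition n, (bNum μ : ℤ) := by
  obtain ⟨-, ⟨d, hd1, hd2, hd3⟩, -⟩ := hX
  choose g hg using exists_perm (n := n)
  have hd : (Matrix.of d).det = 1 := by
    rw [det_of_rank (Matrix.of d) (fun μ => descList μ) (fun i j hij => hd2 i j hij)]
    simp [hd1]
  have hP : ∀ lam mu, (Matrix.of d * Matrix.of X) lam mu = permChar lam (g mu) := by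
    intro lam mu
    rw [hd3, hg]; rfl
  have := det_of_rank (Matrix.of d * Matrix.of X) (fun μ => Multiset.card μ.parts) (by
    intro i j hij
    rw [hP] at hij
    have := permChar_tri i (g j) (by exact_mod_cast hij)
    rwa [hg] at this)
  rw [Matrix.det_mul, hd, one_mul] at this
  rw [this]
  apply Finset.prod_congr rfl
  intro μ _
  rw [hP]
  have := permChar_diag (g μ)
  rw [hg] at this
  rw [this]

/-- Replace `j` copies of `i` by `i` copies of `j`. -/
def swp (i j : ℕ) (hi : 0 < i) (hj : 0 < j) (μ : Nat.Partition n) (h : j ≤ μ.parts.count i) :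
    Nat.Partition n where
  parts := μ.parts - Multiset.replicate j i + Multiset.replicate i j
  parts_pos := by
    intro k hk
    rw [Multiset.mem_add] at hk
    rcases hk with hk | hk
    · exact μ.parts_pos (Multiset.mem_of_le (Multiset.sub_le_self _ _) hk)
    · rw [Multiset.eq_of_mem_replicate hk]; exact hj
  parts_sum := by
    have h1 := Multiset.sub_add_cancel (Multiset.le_count_iff_replicate_le.1 h)
    have h2 := congrArg Multiset.sum h1
    rw [Multiset.sum_add, μ.parts_sum] at h2
    rw [Multiset.sum_add]
    simp only [Multiset.sum_replicate, smul_eq_mul] at h2 ⊢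
    rw [mul_comm i j]; exact h2

lemma swp_count (i j : ℕ) (hi : 0 < i) (hj : 0 < j) (μ : Nat.Partition n)
    (h : j ≤ μ.parts.count i) : i ≤ (swp i j hi hj μ h).parts.count j := by
  simp [swp]

lemma swp_swp (i j : ℕ) (hi : 0 < i) (hj : 0 < j) (μ : Nat.Partition n)
    (h : j ≤ μ.parts.count i) :
    swp j i hj hi (swp i j hi hj μ h) (swp_count i j hi hj μ h) = μ := by
  apply Nat.Partition.ext
  simp only [swp]
  rw [Multiset.add_sub_cancel_right]
  exact Multiset.sub_add_cancel (Multiset.le_count_iff_replicate_le.1 h)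

lemma card_symm (i j : ℕ) (hi : 0 < i) (hj : 0 < j) :
    (Finset.univ.filter fun μ : Nat.Partition n => j ≤ μ.parts.count i).card =
    (Finset.univ.filter fun μ : Nat.Partition n => i ≤ μ.parts.count j).card := by
  apply Finset.card_bij' (fun μ h => swp i j hi hj μ (by simpa using h))
    (fun μ h => swp j i hj hi μ (by simpa using h))
  · intro μ h; exact swp_swp _ _ _ _ _ _
  · intro μ h; exact swp_swp _ _ _ _ _ _
  · intro μ h; simpa using swp_count _ _ _ _ _ _
  · intro μ h; simpa using swp_count _ _ _ _ _ _

lemma count_le (μ : Nat.Partition n) (i : ℕ) : μ.parts.count i ≤ n := by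
  by_cases hi : i ∈ μ.parts
  · have h1 := Multiset.sub_add_cancel (Multiset.le_count_iff_replicate_le.1 (le_refl (μ.parts.count i)))
    have h2 := congrArg Multiset.sum h1
    rw [Multiset.sum_add, μ.parts_sum] at h2
    simp only [Multiset.sum_replicate, smul_eq_mul] at h2
    have := μ.parts_pos hi
    have := Nat.le_mul_of_pos_right (μ.parts.count i) this
    omega
  · simp [Multiset.count_eq_zero_of_notMem hi]

lemma parts_sub (μ : Nat.Partition n) : μ.parts.toFinset ⊆ Finset.Icc 1 n := by
  intro i hi
  rw [Multiset.mem_toFinset] at hi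
  rw [Finset.mem_Icc]
  refine ⟨μ.parts_pos hi, ?_⟩
  rw [← μ.parts_sum]
  exact Multiset.le_sum_of_mem hi

lemma filter_Icc (μ : Nat.Partition n) (i : ℕ) :
    (Finset.Icc 1 n).filter (fun j => j ≤ μ.parts.count i) = Finset.Icc 1 (μ.parts.count i) := by
  ext j
  have := count_le μ i
  simp only [Finset.mem_filter, Finset.mem_Icc]
  omega

lemma aNum_eq (μ : Nat.Partition n) : aNum μ =
    ∏ i ∈ Finset.Icc 1 n, ∏ j ∈ Finset.Icc 1 n, if j ≤ μ.parts.count i then i else 1 := by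
  unfold aNum
  rw [Finset.prod_multiset_count_of_subset _ _ (parts_sub μ)]
  apply Finset.prod_congr rfl
  intro i _
  rw [← Finset.prod_filter, filter_Icc]
  simp

lemma bNum_eq (μ : Nat.Partition n) : bNum μ =
    ∏ i ∈ Finset.Icc 1 n, ∏ j ∈ Finset.Icc 1 n, if j ≤ μ.parts.count i then j else 1 := by
  unfold bNum
  rw [Finset.prod_subset (parts_sub μ)]
  · apply Finset.prod_congr rfl
    intro i _
    rw [← Finset.prod_filter, filter_Icc, ← Finset.prod_Ico_id_eq_factorial]
    rfl
  · intro i _ hi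
    rw [Multiset.mem_toFinset] at hi
    simp [Multiset.count_eq_zero_of_notMem hi]

lemma prod_a_eq_b : ∏ μ : Nat.Partition n, aNum μ = ∏ μ : Nat.Partition n, bNum μ := by
  have key : ∀ F : ℕ → ℕ → ℕ, (∏ μ : Nat.Partition n, ∏ i ∈ Finset.Icc 1 n,
      ∏ j ∈ Finset.Icc 1 n, if j ≤ μ.parts.count i then F i j else 1) =
      ∏ i ∈ Finset.Icc 1 n, ∏ j ∈ Finset.Icc 1 n, F i j ^
        (Finset.univ.filter fun μ : Nat.Partition n => j ≤ μ.parts.count i).card := by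
    intro F
    rw [Finset.prod_comm]
    apply Finset.prod_congr rfl
    intro i _
    rw [Finset.prod_comm]
    apply Finset.prod_congr rfl
    intro j _
    rw [← Finset.prod_filter, Finset.prod_const]
  simp only [aNum_eq, bNum_eq]
  rw [key (fun i _ => i), key (fun _ j => j), Finset.prod_comm]
  apply Finset.prod_congr rfl
  intro i hi
  apply Finset.prod_congr rfl
  intro j hj
  rw [card_symm _ _ (Finset.mem_Icc.1 hi).1 (Finset.mem_Icc.1 hj).1]

/-- The determinant of the character table `X = (χ^λ_μ)_{λ,μ ∈ P(n)}` of the symmetric group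
`S_n` satisfies `det X = ∏_{μ ∈ P(n)} a_μ = ∏_{μ ∈ P(n)} b_μ`. -/
theorem det_char_table (n : ℕ) (X : Nat.Partition n → Nat.Partition n → ℤ)
    (hX : IsCharTable X) :
    (Matrix.of X).det = ∏ μ : Nat.Partition n, (aNum μ : ℤ) ∧
    (Matrix.of X).det = ∏ μ : Nat.Partition n, (bNum μ : ℤ) := by
  have hb := det_eq_b X hX
  refine ⟨?_, hb⟩
  rw [hb]
  exact_mod_cast (prod_a_eq_b (n := n)).symm

end SnTable
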